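/- arXiv:math/0201089 — 3 statements merged into one kernel-verified Lean document; each statement's English description precedes it below -/
import Mathlib

section
/- Let A be a unital associative ring which is strongly non-commutative, i.e. the two-sided ideal of A generated by all commutators equals A. Then every biadditive operation B : A × A → A satisfying the Leibniz rule in both arguments is a Lie bracket: it is skew-symmetric, B(a,b) = −B(b,a), and satisfies the Jacobi identity B(a,B(b,c)) = B(B(a,b),c) + B(b,B(a,c)) for all a, b, c ∈ A. -/
/-! For a Leibniz bracket `B`, expanding `B (a * u) (b * v)` by the two Leibniz rules in either
order gives `⁅a, b⁆ * B u v = B a b * ⁅u, v⁆`, and substituting `x * u` for `u` upgrades this to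
`⁅a, b⁆ * x * B u v = B a b * x * ⁅u, v⁆`. Writing `1` as a signed sum of terms `x * ⁅u, v⁆ * y`
then gives `B a b = z * ⁅a, b⁆` for a fixed `z`. The Leibniz rule for `B` now says that every
`⁅z, c⁆` annihilates all commutators, hence the ideal they generate, hence `1`. So `z` is central
and `B` is a central multiple of the commutator bracket. -/

/-- The Leibniz rule in both arguments of a bracket `B` on `A`. Biadditivity is not part of the
definition. -/
structure IsLeibniz {A : Type*} [Mul A] [Add A] (B : A → A → A) : Prop where
  mul_left : ∀ a b c, B (a * b) c = a * B b c + B a c * b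
  mul_right : ∀ a b c, B a (b * c) = b * B a c + B a b * c

/-- The two-sided ideal generated by the commutators of `A`; the ring `A` is strongly
non-commutative when it is `⊤`. -/
def commutatorIdeal (A : Type*) [NonUnitalNonAssocRing A] : TwoSidedIdeal A :=
  TwoSidedIdeal.span {z | ∃ a b : A, ⁅a, b⁆ = z}

section NonUnitalRing

variable {A : Type*} [NonUnitalRing A]

theorem isLeibniz_lie : IsLeibniz fun a b : A ↦ ⁅a, b⁆ where
  mul_left a b c := by simp only [Ring.lie_def]; noncomm_ring
  mul_right a b c := by simp only [Ring.lie_def]; noncomm_ring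

namespace IsLeibniz

variable {B : A → A → A}

theorem lie_mul_eq_mul_lie (hB : IsLeibniz B) (a b u v : A) : ⁅a, b⁆ * B u v = B a b * ⁅u, v⁆ := by
  have left_first : B (a * u) (b * v) =
      a * (b * B u v + B u b * v) + (b * B a v + B a b * v) * u := by
    rw [hB.mul_left, hB.mul_right, hB.mul_right]
  have right_first : B (a * u) (b * v) =
      b * (a * B u v + B a v * u) + (a * B u b + B a b * u) * v := by
    rw [hB.mul_right, hB.mul_left, hB.mul_left]
  linear_combination (norm := (simp only [Ring.lie_def]; noncomm_ring)) right_first - left_first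

theorem lie_mul_mul_eq_mul_mul_lie (hB : IsLeibniz B) (a b x u v : A) :
    ⁅a, b⁆ * x * B u v = B a b * x * ⁅u, v⁆ := by
  have h := hB.lie_mul_eq_mul_lie a b (x * u) v
  rw [hB.mul_left, isLeibniz_lie.mul_left x u v, mul_add, mul_add, ← mul_assoc, ← mul_assoc,
    ← mul_assoc, ← mul_assoc, hB.lie_mul_eq_mul_lie a b x v] at h
  exact add_right_cancel h

theorem lie_mul_lie_eq_zero {w : A} (hw : IsLeibniz fun a b ↦ w * ⁅a, b⁆) (c a b : A) :
    ⁅w, c⁆ * ⁅a, b⁆ = 0 := by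
  have h := hw.mul_left c a b
  rw [isLeibniz_lie.mul_left c a b, mul_add, ← mul_assoc w ⁅c, b⁆] at h
  rw [Ring.lie_def, sub_mul, sub_eq_zero, mul_assoc, mul_assoc]
  exact add_right_cancel h

end IsLeibniz

end NonUnitalRing

section Ring

variable {A : Type*} [Ring A]

open scoped Pointwise in
theorem mem_commutatorIdeal_iff_mem_addSubgroup_closure {z : A} :
    z ∈ commutatorIdeal A ↔ z ∈ AddSubgroup.closure {t | ∃ x u v y : A, x * ⁅u, v⁆ * y = t} := by
  have generators_eq : (Set.univ : Set A) * {t | ∃ u v : A, ⁅u, v⁆ = t} * Set.univ =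
      {t | ∃ x u v y : A, x * ⁅u, v⁆ * y = t} := by
    ext t
    simp [Set.mem_mul]
  rw [commutatorIdeal, TwoSidedIdeal.mem_span_iff_mem_addSubgroup_closure, generators_eq]

theorem mul_eq_zero_of_mem_commutatorIdeal {s z : A} (hs : ∀ a b : A, s * ⁅a, b⁆ = 0)
    (hz : z ∈ commutatorIdeal A) : s * z = 0 := by
  have mul_mul_lie (x u v : A) : s * (x * ⁅u, v⁆) = 0 := by
    have h := hs (x * u) v
    rwa [isLeibniz_lie.mul_left x u v, mul_add, ← mul_assoc s ⁅x, v⁆, hs, zero_mul, add_zero] at h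
  rw [mem_commutatorIdeal_iff_mem_addSubgroup_closure] at hz
  induction hz using AddSubgroup.closure_induction with
  | mem _ ht =>
    obtain ⟨x, u, v, y, rfl⟩ := ht
    rw [← mul_assoc, mul_mul_lie, zero_mul]
  | zero => exact mul_zero s
  | add y z _ _ hy hz => rw [mul_add, hy, hz, add_zero]
  | neg z _ hz => rw [mul_neg, hz, neg_zero]

namespace IsLeibniz

variable {B : A → A → A}

theorem exists_mul_eq_mul_lie (hB : IsLeibniz B) {z : A} (hz : z ∈ commutatorIdeal A) :
    ∃ w, ∀ a b, z * B a b = w * ⁅a, b⁆ := by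
  rw [mem_commutatorIdeal_iff_mem_addSubgroup_closure] at hz
  induction hz using AddSubgroup.closure_induction with
  | mem _ ht =>
    obtain ⟨x, u, v, y, rfl⟩ := ht
    refine ⟨x * B u v * y, fun a b ↦ ?_⟩
    simpa only [mul_assoc] using congrArg (x * ·) (hB.lie_mul_mul_eq_mul_mul_lie u v y a b)
  | zero => exact ⟨0, fun a b ↦ by rw [zero_mul, zero_mul]⟩
  | add y z _ _ hy hz =>
    obtain ⟨w, hw⟩ := hy
    obtain ⟨w', hw'⟩ := hz
    exact ⟨w + w', fun a b ↦ by rw [add_mul, add_mul, hw, hw']⟩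
  | neg z _ hz =>
    obtain ⟨w, hw⟩ := hz
    exact ⟨-w, fun a b ↦ by rw [neg_mul, neg_mul, hw]⟩

theorem exists_center_smul_lie (hB : IsLeibniz B) (hA : commutatorIdeal A = ⊤) :
    ∃ z : Subring.center A, ∀ a b, B a b = z • ⁅a, b⁆ := by
  have one_mem : (1 : A) ∈ commutatorIdeal A := hA ▸ trivial
  obtain ⟨z, hz⟩ := hB.exists_mul_eq_mul_lie one_mem
  simp only [one_mul] at hz
  obtain rfl : B = fun a b ↦ z * ⁅a, b⁆ := funext₂ hz
  have z_central : z ∈ Subring.center A := Subring.mem_center_iff.mpr fun c ↦ by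
    have h := mul_eq_zero_of_mem_commutatorIdeal (hB.lie_mul_lie_eq_zero c) one_mem
    rw [mul_one, Ring.lie_def, sub_eq_zero] at h
    exact h.symm
  exact ⟨⟨z, z_central⟩, fun a b ↦ rfl⟩

end IsLeibniz

theorem leibniz_bracket_is_lie_bracket_general (hA : commutatorIdeal A = ⊤) {B : A → A → A}
    (hB : IsLeibniz B) :
    (∀ a b : A, B a b = - B b a) ∧
      (∀ a b c : A, B a (B b c) = B (B a b) c + B b (B a c)) := by
  let : LieRing A := .ofAssociativeRing
  obtain ⟨z, hz⟩ := hB.exists_center_smul_lie hA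
  refine ⟨fun a b ↦ ?skew, fun a b c ↦ ?jacobi⟩
  case skew => rw [hz, hz, ← smul_neg, lie_skew]
  case jacobi => simp only [hz, lie_smul, smul_lie, leibniz_lie a b c, smul_add]

end Ring

/-- **Theorem 1 (second part).** If `A` is a unital associative ring that is
strongly non-commutative, then every biadditive operation satisfying the
Leibniz rule in both arguments is a Lie bracket: it is skew-symmetric and
satisfies the Jacobi identity. -/
theorem leibniz_bracket_is_lie_bracket
    {A : Type*} [Ring A]
    (hSNC : ∀ I : TwoSidedIdeal A, (∀ a b : A, a * b - b * a ∈ I) → I = ⊤)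
    (B : A → A → A)
    (haddl : ∀ a b c : A, B (a + b) c = B a c + B b c)
    (haddr : ∀ a b c : A, B a (b + c) = B a b + B a c)
    (hleib_r : ∀ a b₁ b₂ : A, B a (b₁ * b₂) = b₁ * B a b₂ + B a b₁ * b₂)
    (hleib_l : ∀ a b₁ b₂ : A, B (b₁ * b₂) a = b₁ * B b₂ a + B b₁ a * b₂) :
    (∀ a b : A, B a b = - B b a) ∧
      (∀ a b c : A, B a (B b c) = B (B a b) c + B b (B a c)) :=
  leibniz_bracket_is_lie_bracket_general
    (hSNC _ fun a b ↦ TwoSidedIdeal.subset_span ⟨a, b, rfl⟩)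
    ⟨fun a b c ↦ hleib_l c a b, hleib_r⟩
end

section
/- Let k be a field of characteristic zero and A a commutative unital k-algebra with no nonzero nilpotent elements. Let B : A × A → A be a k-bilinear bracket of differential order ≤ 1 in each argument satisfying the Loday Jacobi identity B(x,B(y,z)) = B(B(x,y),z) + B(y,B(x,z)). Then B is skew-symmetric: B(x,y) = −B(y,x) for all x, y ∈ A. -/
/-- `(δ(x)D)(y) = D(x*y) - x*D(y)`. -/
def delta {A : Type*} [NonUnitalNonAssocRing A] (x : A) (D : A → A) : A → A :=
  fun y => D (x * y) - x * D y

/-!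
Let `S` be the symmetrization of the bracket `B`. Adding the Jacobi identities for `(x, y, z)` and
`(y, x, z)` gives `B (S x y) z = 0`, so a composite `B (S x ·) z` of two first-order operators
vanishes, and with it its second-order symbol. As the ring is reduced and `2` is not a zero divisor,
a symmetrized product of two symbols vanishes only if the product does: the derivation part of
`S x` annihilates that of every `B · z`. The derivation part of `S x` minus `x` times that of `S 1`
is a combination of derivation parts of the `B · z`, so it squares to zero. If `B n = 0`, then `n`
kills the square of the derivation part `t` of `S 1`; taking `n = S 1 x` and `n = S 1 1` gives
`t x ^ 3 = 0`. This leaves `S x y = x * y * e` with `e = S 1 1`. Finally `B e e = 0`, so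
`e ^ 3 = S e e = 0` and `e = 0`.
-/

/-- A map `D : A → A` is a differential operator of order at most one, in the sense of
Grothendieck; additivity of `D` is not part of the predicate. -/
def IsFirstOrderOperator {A : Type*} [NonUnitalNonAssocRing A] (D : A → A) : Prop :=
  ∀ u v : A, delta u (delta v D) = 0

/-- The derivation part of a first-order operator `D`, that is, `D` minus multiplication by `D 1`;
it carries the principal symbol of `D`. -/
def derivationPart {A : Type*} [NonAssocRing A] (D : A → A) (y : A) : A :=
  D y - y * D 1

/-- The symmetrization of a bracket, without the factor `1 / 2`: it measures the failure of
skew-symmetry. -/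
def symmetrization {A : Type*} [Add A] (B : A → A → A) (x y : A) : A :=
  B x y + B y x

theorem symmetrization_comm {A : Type*} [AddCommMagma A] (B : A → A → A) (x y : A) :
    symmetrization B x y = symmetrization B y x :=
  add_comm _ _

theorem apply_symmetrization_left_eq_zero {A : Type*} [AddCommGroup A] {B : A → A → A}
    (haddl : ∀ a b c : A, B (a + b) c = B a c + B b c)
    (hjacobi : ∀ x y z : A, B x (B y z) = B (B x y) z + B y (B x z)) (x y z : A) :
    B (symmetrization B x y) z = 0 := by
  rw [symmetrization, haddl, eq_sub_of_add_eq (hjacobi x y z).symm,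
    eq_sub_of_add_eq (hjacobi y x z).symm, sub_add_sub_cancel, sub_self]

section FirstOrderOperators

section NonUnitalNonAssocRing

variable {A : Type*} [NonUnitalNonAssocRing A]

theorem delta_add (x : A) (D E : A → A) : delta x (D + E) = delta x D + delta x E := by
  funext y
  simp only [delta, Pi.add_apply, mul_add, add_sub_add_comm]

theorem IsFirstOrderOperator.add {D E : A → A} (hD : IsFirstOrderOperator D)
    (hE : IsFirstOrderOperator E) : IsFirstOrderOperator (D + E) := by
  intro u v
  rw [delta_add, delta_add, hD, hE, add_zero]

end NonUnitalNonAssocRing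

variable {A : Type*} [CommRing A] {D : A → A}

theorem IsFirstOrderOperator.map_mul (hD : IsFirstOrderOperator D) (y z : A) :
    D (y * z) = y * D z + z * D y - y * z * D 1 := by
  have h := congrFun (hD z y) 1
  simp only [delta, Pi.zero_apply, mul_one] at h
  linear_combination h

theorem IsFirstOrderOperator.delta_delta_comp_apply_one {F : A →+ A} (hF : IsFirstOrderOperator F)
    (hD : IsFirstOrderOperator D) (y w : A) :
    delta w (delta y (F ∘ D)) 1 =
      derivationPart D y * derivationPart F w + derivationPart D w * derivationPart F y := by
  have hFD : F (D (y * w)) = F (y * D w) + F (w * D y) - F (y * w * D 1) := by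
    rw [hD.map_mul, map_sub, map_add]
  simp only [hF.map_mul] at hFD
  simp only [delta, derivationPart, Function.comp_apply, mul_one]
  linear_combination hFD

end FirstOrderOperators

section ReducedRing

variable {A : Type*} [CommRing A] [IsReduced A]

theorem mul_eq_zero_of_mul_add_mul_eq_zero {ι : Type*} {f g : ι → A}
    (htwo : (2 : A) ∈ nonZeroDivisors A) (hfg : ∀ i j, f i * g j + f j * g i = 0) (i j : ι) :
    f i * g j = 0 := by
  have hdiag : f i * g i = 0 := by
    rw [← mul_left_mem_nonZeroDivisors_eq_zero_iff htwo, two_mul, hfg]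
  refine eq_zero_of_pow_eq_zero (n := 2) ?_
  linear_combination f i * g j * hfg i j - f j * g j * hdiag

theorem derivationPart_mul_derivationPart_eq_zero {F : A →+ A} {D : A → A}
    (htwo : (2 : A) ∈ nonZeroDivisors A) (hF : IsFirstOrderOperator F)
    (hD : IsFirstOrderOperator D) (hFD : ∀ y, F (D y) = 0) (y w : A) :
    derivationPart D y * derivationPart F w = 0 := by
  refine mul_eq_zero_of_mul_add_mul_eq_zero htwo (fun y w => ?_) y w
  rw [← hF.delta_delta_comp_apply_one hD]
  simp only [delta, Function.comp_apply, hFD, mul_zero, sub_zero]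

end ReducedRing

section Brackets

variable {A : Type*} [CommRing A] {B : A → A → A}

theorem mul_derivationPart_symmetrization_one_sq_eq_zero
    (horth : ∀ w y z : A,
      derivationPart (symmetrization B 1) w * derivationPart (B · z) y = 0)
    {n : A} (hn : ∀ z, B n z = 0) (x : A) :
    n * derivationPart (symmetrization B 1) x ^ 2 = 0 := by
  set t := derivationPart (symmetrization B 1) x with ht
  have ht_mul (y z : A) : t * (B y z - y * B 1 z) = 0 := horth x y z
  have hB_one (z : A) : n * t * B 1 z = 0 := by
    linear_combination t * hn z - ht_mul n z
  have ht_eq : t = (B 1 x - x * B 1 1) + (B x 1 - x * B 1 1) := by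
    rw [ht, derivationPart, symmetrization, symmetrization]
    ring
  linear_combination n * t * ht_eq + hB_one x - x * hB_one 1 + n * ht_mul x 1

variable [IsReduced A]

theorem derivationPart_symmetrization_mul_derivationPart_eq_zero
    (htwo : (2 : A) ∈ nonZeroDivisors A)
    (haddl : ∀ a b c : A, B (a + b) c = B a c + B b c)
    (hright : ∀ x, IsFirstOrderOperator (B x)) (hleft : ∀ z, IsFirstOrderOperator (B · z))
    (hjacobi : ∀ x y z : A, B x (B y z) = B (B x y) z + B y (B x z)) (x w y z : A) :
    derivationPart (symmetrization B x) w * derivationPart (B · z) y = 0 :=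
  derivationPart_mul_derivationPart_eq_zero (F := AddMonoidHom.mk' (B · z) (haddl · · z)) htwo
    (hleft z) ((hright x).add (hleft x))
    (fun w => apply_symmetrization_left_eq_zero haddl hjacobi x w z) w y

theorem derivationPart_symmetrization_eq_mul
    (horth : ∀ x w y z : A,
      derivationPart (symmetrization B x) w * derivationPart (B · z) y = 0) (x y : A) :
    derivationPart (symmetrization B x) y = x * derivationPart (symmetrization B 1) y := by
  set d := derivationPart (symmetrization B x) y - x * derivationPart (symmetrization B 1) y
    with hd
  have hd_eq : d = (derivationPart (B · y) x - y * derivationPart (B · 1) x) +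
      (derivationPart (B · x) y - x * derivationPart (B · 1) y) := by
    simp only [hd, derivationPart, symmetrization]
    ring
  have hd_mul (u v : A) : d * derivationPart (B · v) u = 0 := by
    linear_combination horth x y u v - x * horth 1 y u v
  refine sub_eq_zero.mp (eq_zero_of_pow_eq_zero (n := 2) ?_)
  linear_combination d * hd_eq + hd_mul x y - y * hd_mul x 1 + hd_mul y x - x * hd_mul y 1

theorem derivationPart_symmetrization_one_eq_zero
    (horth : ∀ w y z : A,
      derivationPart (symmetrization B 1) w * derivationPart (B · z) y = 0)
    (hker : ∀ y z : A, B (symmetrization B 1 y) z = 0) (x : A) :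
    derivationPart (symmetrization B 1) x = 0 := by
  set t := derivationPart (symmetrization B 1) x
  have hS : symmetrization B 1 x = t + x * symmetrization B 1 1 := (sub_add_cancel _ _).symm
  have hx : symmetrization B 1 x * t ^ 2 = 0 :=
    mul_derivationPart_symmetrization_one_sq_eq_zero horth (hker x) x
  have hone : symmetrization B 1 1 * t ^ 2 = 0 :=
    mul_derivationPart_symmetrization_one_sq_eq_zero horth (hker 1) x
  refine eq_zero_of_pow_eq_zero (n := 3) ?_
  linear_combination hx - t ^ 2 * hS - x * hone

theorem symmetrization_eq_mul_symmetrization_one_one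
    (horth : ∀ x w y z : A,
      derivationPart (symmetrization B x) w * derivationPart (B · z) y = 0)
    (hker : ∀ x y z : A, B (symmetrization B x y) z = 0) (x y : A) :
    symmetrization B x y = x * y * symmetrization B 1 1 := by
  have hone (w : A) : symmetrization B 1 w = w * symmetrization B 1 1 :=
    sub_eq_zero.mp (derivationPart_symmetrization_one_eq_zero (horth 1) (hker 1) w)
  have hx : symmetrization B x y = y * symmetrization B x 1 := by
    refine sub_eq_zero.mp ((derivationPart_symmetrization_eq_mul horth x y).trans ?_)
    rw [derivationPart_symmetrization_one_eq_zero (horth 1) (hker 1), mul_zero]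
  rw [hx, symmetrization_comm, hone]
  ring

theorem symmetrization_eq_zero_of_eq_mul
    (hker : ∀ z : A, B (symmetrization B 1 1) z = 0)
    (hmul : ∀ x y : A, symmetrization B x y = x * y * symmetrization B 1 1) (x y : A) :
    symmetrization B x y = 0 := by
  set e := symmetrization B 1 1
  have he : e = 0 := by
    refine eq_zero_of_pow_eq_zero (n := 3) ?_
    calc e ^ 3 = symmetrization B e e := by rw [hmul, pow_three']
      _ = 0 := by rw [symmetrization, hker, add_zero]
  rw [hmul, he, mul_zero]

theorem first_order_loday_bracket_skew_symmetric_general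
    (htwo : (2 : A) ∈ nonZeroDivisors A)
    (haddl : ∀ a b c : A, B (a + b) c = B a c + B b c)
    (hright : ∀ x, IsFirstOrderOperator (B x)) (hleft : ∀ z, IsFirstOrderOperator (B · z))
    (hjacobi : ∀ x y z : A, B x (B y z) = B (B x y) z + B y (B x z)) (x y : A) :
    B x y = -B y x := by
  have hker := apply_symmetrization_left_eq_zero haddl hjacobi
  have horth := derivationPart_symmetrization_mul_derivationPart_eq_zero
    htwo haddl hright hleft hjacobi
  have hmul := symmetrization_eq_mul_symmetrization_one_one horth hker
  exact eq_neg_of_add_eq_zero_left (symmetrization_eq_zero_of_eq_mul (hker 1 1) hmul x y)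

end Brackets

/-- A first-order Loday bracket on a reduced commutative unital algebra over a
field of characteristic zero is skew-symmetric. -/
theorem first_order_loday_bracket_skew_symmetric
    {k : Type*} [Field k] [CharZero k]
    {A : Type*} [CommRing A] [Algebra k A] [IsReduced A]
    (B : A → A → A)
    (haddl : ∀ a b c : A, B (a + b) c = B a c + B b c)
    (haddr : ∀ a b c : A, B a (b + c) = B a b + B a c)
    (hsmull : ∀ (t : k) (a b : A), B (t • a) b = t • B a b)
    (hsmulr : ∀ (t : k) (a b : A), B a (t • b) = t • B a b)
    (horder : ∀ u v x : A,
      delta u (delta v (fun y => B x y)) = 0 ∧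
      delta u (delta v (fun y => B y x)) = 0)
    (hjacobi : ∀ x y z : A, B x (B y z) = B (B x y) z + B y (B x z)) :
    ∀ x y : A, B x y = - B y x := by
  have htwo : IsUnit (2 : A) := by
    simpa only [map_ofNat] using (IsUnit.mk0 (2 : k) two_ne_zero).map (algebraMap k A)
  exact first_order_loday_bracket_skew_symmetric_general htwo.mem_nonZeroDivisors haddl
    (fun x u v => (horder u v x).1) (fun z u v => (horder u v z).2) hjacobi
end

section
/- Let k be a field of characteristic zero and A a commutative unital k-algebra with no nonzero nilpotent elements. Let B : A × A → A be a k-bilinear bracket which is a bidifferential operator of some order n and satisfies the Loday Jacobi identity B(x,B(y,z)) = B(B(x,y),z) + B(y,B(x,z)). Then there exist a k-derivation Γ : A → A and a k-bilinear map Λ : A × A → A which is skew-symmetric and a derivation in each argument, such that B(x,y) = Λ(x,y) + x·Γ(y) − y·Γ(x) for all x, y ∈ A. -/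
/-- `D : A → A` is a differential operator of order `≤ n` if
`δ(x₁)⋯δ(x_{n+1}) D = 0` for all `x₁, …, x_{n+1} ∈ A`. -/
def IsDiffOpLE {A : Type*} [NonUnitalNonAssocRing A] : ℕ → (A → A) → Prop
  | 0, D => ∀ x : A, delta x D = 0
  | n + 1, D => ∀ x : A, IsDiffOpLE n (delta x D)

/-!
Write `B_x = B(x, ·)`, so that the Jacobi identity reads `[B_x, B_y] = B_{B(x,y)}`. If every `B_x`
has order at most `N ≥ 2`, then the right-hand side is invisible in order `2N - 1`, and the Poisson
brackets of the symbols of `B_x` and `B_y` vanish. Evaluated on a differential `dr`, this says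
`X_x (u y) = X_y (u x)`, where `u x` is the symbol of `B_x` at `dr` and the derivation `X_x` is its
polarization, so that `u x = X_x r`. As operators in `x`, both sides have the order of `u` rather
than one more, which makes the cube of the symbol of `u` vanish. Since `A` is reduced, the order in
`x` of `u` drops step by step until `u = 0`, and in the end `B_x` has order at most one.

The Jacobi identity also gives `B(B(x,y) + B(y,x), z) = 0`. Its symbols in `x` show that the top
symbol in the first argument squares to zero as long as its order is at least two. Hence `B` has
order at most one in both arguments, and splits as `Λ(x,y) + x·G(y) + y·H(x) + c·x·y` for a
biderivation `Λ`, derivations `G`, `H` and a constant `c`. The same identity turns `G + H`, `Λ(x,x)`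
and `c` into nilpotent elements.
-/

open Finset

section Polarization

theorem eq_zero_of_forall_sum_pow_smul_eq_zero {M : Type*} [AddCommGroup M] [IsAddTorsionFree M]
    {N : ℕ} {c : Fin N → M} (h : ∀ t : ℕ, ∑ i : Fin N, t ^ (i : ℕ) • c i = 0) : c = 0 := by
  set V : Matrix (Fin N) (Fin N) ℤ := Matrix.vandermonde fun i ↦ (i : ℤ) with hV
  have hdet : V.det ≠ 0 :=
    Matrix.det_vandermonde_ne_zero_iff.mpr fun i j hij ↦ Fin.ext (by exact_mod_cast hij)
  have hrow (t : Fin N) : ∑ i, V t i • c i = 0 := by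
    simpa [hV, Matrix.vandermonde_apply, ← natCast_zsmul] using h t
  funext i
  refine (smul_eq_zero_iff_right hdet).mp ?_
  calc V.det • c i = ∑ j, (V.adjugate * V) i j • c j := by
        simp [Matrix.adjugate_mul, Matrix.one_apply]
    _ = ∑ t, V.adjugate i t • ∑ j, V t j • c j := by
        simp only [Matrix.mul_apply, sum_smul, smul_sum, mul_smul]
        exact sum_comm
    _ = 0 := by simp [hrow]

theorem map_mul_pow_eq_zero_of_forall_map_pow_eq_zero {G R M : Type*} [AddCommMonoid G]
    [Semiring R] [AddCommGroup M] [IsAddTorsionFree M] {d : G →+ R}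
    (hd : ∀ r s, Commute (d r) (d s)) {φ : R →+ M} {n : ℕ} (h : ∀ r, φ (d r ^ (n + 1)) = 0)
    (r s : G) :
    φ (d s * d r ^ n) = 0 := by
  let c : Fin (n + 2) → M := fun i ↦ (n + 1).choose i • φ (d s ^ (i : ℕ) * d r ^ (n + 1 - i))
  have hc (t : ℕ) : ∑ i : Fin (n + 2), t ^ (i : ℕ) • c i = 0 := by
    rw [← h (t • s + r), map_add, map_nsmul, ((hd s r).smul_left t).add_pow (n + 1), map_sum,
      ← Fin.sum_univ_eq_sum_range fun i ↦
        φ ((t • d s) ^ i * d r ^ (n + 1 - i) * ((n + 1).choose i : R))]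
    refine sum_congr rfl fun i _ ↦ ?_
    simp only [c]
    rw [← map_nsmul, ← map_nsmul, ← nsmul_eq_mul', smul_pow, smul_mul_assoc, smul_comm]
  have hlinear : (n + 1) • φ (d s * d r ^ n) = 0 := by
    simpa [c] using congr_fun (eq_zero_of_forall_sum_pow_smul_eq_zero hc) ⟨1, by lia⟩
  exact (smul_eq_zero_iff_right n.succ_ne_zero).mp hlinear

end Polarization

section DiffOp

variable {k A : Type*} [CommRing k] [CommRing A] [Algebra k A]

variable (k) in
/-- The operator `δ(r)` restricted to `k`-linear endomorphisms, linear in `r`. -/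
def deltaEnd : A →ₗ[k] Module.End k (Module.End k A) :=
  LinearMap.mk₂ k (fun r D ↦ D * LinearMap.mulLeft k r - r • D)
    (fun r s D ↦ by
      ext a
      simp only [LinearMap.sub_apply, LinearMap.add_apply, Module.End.mul_apply,
        LinearMap.mulLeft_apply, LinearMap.smul_apply, add_mul, map_add, smul_eq_mul]
      ring)
    (fun t r D ↦ by ext a; simp [smul_sub])
    (fun r D E ↦ by
      ext a
      simp only [LinearMap.sub_apply, LinearMap.add_apply, Module.End.mul_apply,
        LinearMap.mulLeft_apply, LinearMap.smul_apply, smul_add, smul_eq_mul]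
      ring)
    (fun t r D ↦ by ext a; simp [smul_sub])

namespace deltaEnd

theorem apply_apply (r : A) (D : Module.End k A) (a : A) :
    deltaEnd k r D a = D (r * a) - r * D a := by
  simp [deltaEnd]

theorem coe_apply (r : A) (D : Module.End k A) : ⇑(deltaEnd k r D) = delta r D :=
  funext fun a ↦ apply_apply r D a

theorem commute (r s : A) : Commute (deltaEnd k r) (deltaEnd k s) := by
  ext D a
  simp only [Module.End.mul_apply, apply_apply]
  rw [mul_left_comm s r a]
  ring

theorem map_smul (r a : A) (D : Module.End k A) :
    deltaEnd k r (a • D) = a • deltaEnd k r D := by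
  ext b
  simp [apply_apply, mul_sub, mul_left_comm]

theorem pow_map_smul (r a : A) (n : ℕ) (D : Module.End k A) :
    (deltaEnd k r ^ n) (a • D) = a • (deltaEnd k r ^ n) D := by
  induction n with
  | zero => rfl
  | succ n ih => simp only [pow_succ', Module.End.mul_apply, ih, map_smul]

theorem map_mul (r : A) (D E : Module.End k A) :
    deltaEnd k r (D * E) = deltaEnd k r D * E + D * deltaEnd k r E := by
  ext a
  simp [apply_apply]

theorem pow_map_mul (r : A) (D E : Module.End k A) (n : ℕ) :
    (deltaEnd k r ^ n) (D * E) =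
      ∑ ij ∈ antidiagonal n,
        n.choose ij.1 • ((deltaEnd k r ^ ij.1) D * (deltaEnd k r ^ ij.2) E) := by
  induction n with
  | zero => simp
  | succ n ih =>
    rw [sum_antidiagonal_choose_succ_nsmul
      (fun i j ↦ (deltaEnd k r ^ i) D * (deltaEnd k r ^ j) E) n]
    simp only [pow_succ', Module.End.mul_apply, ih, map_sum, map_nsmul, map_mul, nsmul_add,
      sum_add_distrib]
    rw [add_comm, add_left_cancel_iff]
    refine sum_congr rfl fun ij hij ↦ ?_
    rw [Nat.choose_symm_of_eq_add (mem_antidiagonal.mp hij).symm]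

end deltaEnd

namespace IsDiffOpLE

theorem sub {n : ℕ} {D E : A → A} (hD : IsDiffOpLE n D) (hE : IsDiffOpLE n E) :
    IsDiffOpLE n (fun x ↦ D x - E x) := by
  have hdelta (D E : A → A) (r : A) :
      delta r (fun x ↦ D x - E x) = fun x ↦ delta r D x - delta r E x := by
    funext x
    simp only [delta]
    ring
  induction n generalizing D E with
  | zero => exact fun r ↦ by simp only [hdelta, hD r, hE r, Pi.zero_apply, sub_zero]; rfl
  | succ n ih => exact fun r ↦ hdelta D E r ▸ ih (hD r) (hE r)

theorem const_mul {n : ℕ} {D : A → A} (hD : IsDiffOpLE n D) (a : A) :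
    IsDiffOpLE n (fun x ↦ a * D x) := by
  have hdelta (D : A → A) (r : A) : delta r (fun x ↦ a * D x) = fun x ↦ a * delta r D x := by
    funext x
    simp only [delta]
    ring
  induction n generalizing D with
  | zero => exact fun r ↦ by simp only [hdelta, hD r, Pi.zero_apply, mul_zero]; rfl
  | succ n ih => exact fun r ↦ hdelta D r ▸ ih (hD r)

theorem zero (n : ℕ) : IsDiffOpLE n (0 : A → A) := by
  have hdelta (r : A) : delta r (0 : A → A) = 0 := by
    funext x
    simp [delta]
  induction n with
  | zero => exact hdelta
  | succ n ih => exact fun r ↦ (hdelta r).symm ▸ ih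

theorem mono {m n : ℕ} {D : A → A} (hD : IsDiffOpLE m D) (hmn : m ≤ n) : IsDiffOpLE n D := by
  induction m generalizing n D with
  | zero =>
    cases n with
    | zero => exact hD
    | succ n => exact fun r ↦ (hD r).symm ▸ zero n
  | succ m ih =>
    obtain ⟨n, rfl⟩ := Nat.exists_eq_add_of_lt hmn
    exact fun r ↦ ih (hD r) (by lia)

section End

variable {n : ℕ} {D : Module.End k A}

theorem pow_deltaEnd {j : ℕ} (hD : IsDiffOpLE (j + n) D) (r : A) :
    IsDiffOpLE n ((deltaEnd k r ^ j) D) := by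
  induction j generalizing D with
  | zero => rwa [zero_add] at hD
  | succ j ih =>
    rw [Nat.succ_add] at hD
    rw [pow_succ, Module.End.mul_apply]
    exact ih (deltaEnd.coe_apply r D ▸ hD r)

theorem pow_deltaEnd_eq_zero (hD : IsDiffOpLE n D) {j : ℕ} (hj : n < j) (r : A) :
    (deltaEnd k r ^ j) D = 0 := by
  have hsucc : (deltaEnd k r ^ (n + 1)) D = 0 := by
    rw [pow_succ', Module.End.mul_apply]
    have h0 : IsDiffOpLE 0 ((deltaEnd k r ^ n) D) := pow_deltaEnd (n := 0) (j := n) hD r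
    exact DFunLike.coe_injective ((deltaEnd.coe_apply r _).trans (h0 r))
  obtain ⟨i, rfl⟩ := Nat.exists_eq_add_of_lt hj
  rw [add_right_comm, add_comm, pow_add, Module.End.mul_apply, hsucc, map_zero]

theorem iff_forall_pow_deltaEnd_eq_zero [IsAddTorsionFree A] :
    IsDiffOpLE n D ↔ ∀ r, (deltaEnd k r ^ (n + 1)) D = 0 := by
  refine ⟨fun hD ↦ hD.pow_deltaEnd_eq_zero n.lt_succ_self, fun h ↦ ?_⟩
  induction n generalizing D with
  | zero =>
    intro r
    rw [← deltaEnd.coe_apply, ← pow_one (deltaEnd k r), h r]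
    rfl
  | succ n ih =>
    intro s
    rw [← deltaEnd.coe_apply]
    refine ih fun r ↦ LinearMap.ext fun a ↦ ?_
    have := map_mul_pow_eq_zero_of_forall_map_pow_eq_zero (d := (deltaEnd k).toAddMonoidHom)
      (φ := (LinearMap.applyₗ a ∘ₗ LinearMap.applyₗ D).toAddMonoidHom) (n := n + 1)
      deltaEnd.commute (fun r ↦ by simp [h r]) r s
    simpa [((deltaEnd.commute s r).pow_right _).eq] using this

end End

end IsDiffOpLE

/-- `n!` times the value at `dr` of the principal symbol of an operator of order at most `n`. -/
def symbol (n : ℕ) (r : A) : Module.End k A →ₗ[k] A :=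
  LinearMap.applyₗ 1 ∘ₗ (deltaEnd k r ^ n)

theorem symbol_apply (n : ℕ) (r : A) (D : Module.End k A) :
    symbol n r D = (deltaEnd k r ^ n) D 1 := rfl

theorem symbol_smul (n : ℕ) (r a : A) (D : Module.End k A) :
    symbol n r (a • D) = a * symbol n r D := by
  rw [symbol_apply, deltaEnd.pow_map_smul, LinearMap.smul_apply, smul_eq_mul, symbol_apply]

namespace IsDiffOpLE

variable {n : ℕ} {D : Module.End k A}

theorem pow_deltaEnd_apply (hD : IsDiffOpLE n D) (r a : A) :
    (deltaEnd k r ^ n) D a = a * symbol n r D := by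
  have h0 : IsDiffOpLE 0 ((deltaEnd k r ^ n) D) := pow_deltaEnd (n := 0) (j := n) hD r
  have h : deltaEnd k a ((deltaEnd k r ^ n) D) 1 = 0 := by
    rw [deltaEnd.coe_apply, h0 a, Pi.zero_apply]
  rwa [deltaEnd.apply_apply, mul_one, sub_eq_zero] at h

theorem symbol_eq_zero (hD : IsDiffOpLE n D) {j : ℕ} (hj : n < j) (r : A) :
    symbol j r D = 0 := by
  rw [symbol_apply, hD.pow_deltaEnd_eq_zero hj, LinearMap.zero_apply]

theorem of_forall_symbol_eq_zero [IsAddTorsionFree A] (hD : IsDiffOpLE (n + 1) D)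
    (h : ∀ r, symbol (n + 1) r D = 0) : IsDiffOpLE n D :=
  iff_forall_pow_deltaEnd_eq_zero.mpr fun r ↦ LinearMap.ext fun a ↦ by
    rw [hD.pow_deltaEnd_apply, h, mul_zero, LinearMap.zero_apply]

theorem symbol_mul {m : ℕ} {E : Module.End k A} (hD : IsDiffOpLE m D) (hE : IsDiffOpLE n E)
    (r : A) :
    symbol (m + n) r (D * E) = (m + n).choose m • (symbol m r D * symbol n r E) := by
  rw [symbol_apply, deltaEnd.pow_map_mul, sum_eq_single (m, n)]
  · simp [hE.pow_deltaEnd_apply, hD.pow_deltaEnd_apply, mul_comm]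
  · rintro ⟨i, j⟩ hij hne
    have hsum : i + j = m + n := mem_antidiagonal.mp hij
    rcases lt_trichotomy i m with hi | rfl | hi
    · simp [hE.pow_deltaEnd_eq_zero (show n < j by lia)]
    · exact absurd (congrArg (Prod.mk i) (Nat.add_left_cancel hsum)) hne
    · simp [hD.pow_deltaEnd_eq_zero hi]
  · simp

theorem symbol_mul_eq_zero [IsAddTorsionFree A] {m : ℕ} {E : Module.End k A}
    (hD : IsDiffOpLE m D) (hE : IsDiffOpLE n E) (r : A) (h : symbol (m + n) r (D * E) = 0) :
    symbol m r D * symbol n r E = 0 := by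
  rw [hD.symbol_mul hE] at h
  exact (smul_eq_zero_iff_right (Nat.choose_pos (Nat.le_add_right m n)).ne').mp h

/-- The derivation part `a ↦ D a - a * D 1` of an operator of order at most one. -/
def toDerivation (hD : IsDiffOpLE 1 D) : Derivation k A A :=
  Derivation.mk' (D - LinearMap.mulRight k (D 1)) fun a b ↦ by
    have h : delta b (delta a D) 1 = 0 := congr_fun (hD a b) 1
    simp only [delta, mul_one] at h
    simp only [LinearMap.sub_apply, LinearMap.mulRight_apply, smul_eq_mul]
    linear_combination h

theorem toDerivation_apply (hD : IsDiffOpLE 1 D) (a : A) :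
    hD.toDerivation a = D a - a * D 1 := by
  simp [toDerivation]

end IsDiffOpLE

end DiffOp

section Reduction

variable {k A : Type*} [CommRing k] [CommRing A] [Algebra k A]

namespace IsDiffOpLE

theorem pow_deltaEnd_mul_apply_one {n : ℕ} {D E : Module.End k A}
    (hD : IsDiffOpLE (n + 1) D) (hE : IsDiffOpLE (n + 1) E) (r : A) :
    (deltaEnd k r ^ (2 * n + 1)) (D * E) 1 = (2 * n + 1).choose n •
      ((deltaEnd k r ^ n) D (symbol (n + 1) r E) +
        symbol (n + 1) r D * (deltaEnd k r ^ n) E 1) := by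
  rw [deltaEnd.pow_map_mul, sum_eq_add (n, n + 1) (n + 1, n) (by simp)]
  · simp only [LinearMap.add_apply, LinearMap.smul_apply, Module.End.mul_apply, smul_add,
      hD.pow_deltaEnd_apply r ((deltaEnd k r ^ n) E 1), symbol_apply,
      mul_comm ((deltaEnd k r ^ n) E 1), Nat.choose_symm_half]
  · rintro ⟨i, j⟩ hij ⟨hne, hne'⟩
    have hsum : i + j = 2 * n + 1 := mem_antidiagonal.mp hij
    rcases lt_or_ge i n with hi | hi
    · simp [hE.pow_deltaEnd_eq_zero (show n + 1 < j by lia)]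
    · have hi' : n + 1 < i := by
        by_contra! hle
        grind
      simp [hD.pow_deltaEnd_eq_zero hi']
  · exact fun h ↦ (h (HasAntidiagonal.mem_antidiagonal.mpr (by lia))).elim
  · exact fun h ↦ (h (HasAntidiagonal.mem_antidiagonal.mpr (by lia))).elim

theorem deltaEnd_symbol_pow_deltaEnd_comm [IsAddTorsionFree A] {n : ℕ} {D E : Module.End k A}
    (hD : IsDiffOpLE (n + 1) D) (hE : IsDiffOpLE (n + 1) E) {r : A}
    (h : (deltaEnd k r ^ (2 * n + 1)) (D * E) 1 = (deltaEnd k r ^ (2 * n + 1)) (E * D) 1) :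
    deltaEnd k (symbol (n + 1) r E) ((deltaEnd k r ^ n) D) 1 =
      deltaEnd k (symbol (n + 1) r D) ((deltaEnd k r ^ n) E) 1 := by
  rw [hD.pow_deltaEnd_mul_apply_one hE, hE.pow_deltaEnd_mul_apply_one hD] at h
  have h' := nsmul_right_injective (Nat.choose_pos (show n ≤ 2 * n + 1 by lia)).ne' h
  simp only [deltaEnd.apply_apply, mul_one]
  linear_combination h'

end IsDiffOpLE

theorem deltaEnd_derivation_mul (Y : Derivation k A A) (r : A) (u : Module.End k A) :
    deltaEnd k r (↑Y * u) = ↑Y * deltaEnd k r u + Y r • u := by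
  ext a
  simp only [deltaEnd.apply_apply, Module.End.mul_apply, Derivation.coeFn_coe,
    LinearMap.add_apply, LinearMap.smul_apply, map_sub, Derivation.leibniz, smul_eq_mul]
  ring

theorem isDiffOpLE_derivation (Y : Derivation k A A) : IsDiffOpLE 1 Y := by
  intro r s
  funext a
  simp only [delta, Derivation.leibniz, smul_eq_mul, add_sub_cancel_left, Pi.zero_apply]
  ring

theorem symbol_one_derivation (Y : Derivation k A A) (r : A) :
    symbol 1 r (Y : Module.End k A) = Y r := by
  simp [symbol_apply, deltaEnd.apply_apply]

theorem derivation_apply_mul_symbol_sq_eq_zero [IsAddTorsionFree A] {Y : Derivation k A A}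
    {u : Module.End k A} {m : ℕ} (hu : IsDiffOpLE m u)
    (hYu : IsDiffOpLE m ((Y : Module.End k A) * u)) (f p : A) :
    Y f * symbol m p u ^ 2 = 0 := by
  set s := symbol m p u
  have hYp : s * Y p = 0 := by
    have h := IsDiffOpLE.symbol_mul_eq_zero (isDiffOpLE_derivation Y) hu p
      (hYu.symbol_eq_zero (by lia) p)
    rwa [symbol_one_derivation, mul_comm] at h
  have hpow (j : ℕ) : s • (deltaEnd k p ^ j) (↑Y * u) = s • (↑Y * (deltaEnd k p ^ j) u) := by
    induction j with
    | zero => rfl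
    | succ j ih =>
      simp only [pow_succ', Module.End.mul_apply]
      rw [← deltaEnd.map_smul, ih, deltaEnd.map_smul, deltaEnd_derivation_mul, smul_add, smul_smul,
        hYp, zero_smul, add_zero]
  have hcomp : s • (deltaEnd k p ^ m) (↑Y * u) =
      s • ((Y : Module.End k A) * LinearMap.mulRight k s) := by
    rw [hpow]
    congr 2
    ext a
    exact hu.pow_deltaEnd_apply p a
  calc Y f * s ^ 2 = deltaEnd k f (s • ((Y : Module.End k A) * LinearMap.mulRight k s)) 1 := by
        simp only [deltaEnd.apply_apply, LinearMap.smul_apply, Module.End.mul_apply,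
          LinearMap.mulRight_apply, Derivation.coeFn_coe, Derivation.leibniz, smul_eq_mul, mul_one,
          one_mul]
        ring
    _ = 0 := by
        rw [← hcomp, ← deltaEnd.pow_map_smul, deltaEnd.apply_apply, deltaEnd.pow_map_smul]
        simp [hYu.pow_deltaEnd_apply, mul_left_comm]

theorem symbol_eq_zero_of_derivation_comm [IsAddTorsionFree A] [IsReduced A]
    {X : A → Derivation k A A} {u : Module.End k A} {m : ℕ} {r : A}
    (hX : ∀ s, IsDiffOpLE m fun x ↦ X x s) (hu : ∀ x, u x = X x r)
    (hcomm : ∀ x y, X x (u y) = X y (u x)) (p : A) : symbol m p u = 0 := by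
  set s := symbol m p u with hs
  have hu' : IsDiffOpLE m u := by simpa only [← hu] using hX r
  have hs_smul : s ^ 2 • u = 0 := by
    ext y
    have hYu : IsDiffOpLE m ((X y : Module.End k A) * u) := by
      convert hX (u y) using 2 with x
      exact (hcomm x y).symm
    simpa [hu, mul_comm] using derivation_apply_mul_symbol_sq_eq_zero hu' hYu r p
  have hcube : s ^ 3 = 0 :=
    calc s ^ 3 = symbol m p (s ^ 2 • u) := by rw [symbol_smul, ← hs, pow_succ]
      _ = 0 := by rw [hs_smul, map_zero]
  exact eq_zero_of_pow_eq_zero hcube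

end Reduction

section SecondArgument

variable {k A : Type*} [CommRing k] [CommRing A] [Algebra k A] {B : A →ₗ[k] Module.End k A}
  {m n : ℕ}

theorem isDiffOpLE_pow_deltaEnd_apply (hB : ∀ y, IsDiffOpLE m fun x ↦ B x y) (r : A) (j : ℕ)
    (y : A) : IsDiffOpLE m fun x ↦ (deltaEnd k r ^ j) (B x) y := by
  induction j generalizing y with
  | zero => exact hB y
  | succ j ih =>
    simp only [pow_succ', Module.End.mul_apply, deltaEnd.apply_apply]
    exact (ih _).sub ((ih y).const_mul r)

theorem isDiffOpLE_deltaEnd_pow_of_symbol [IsAddTorsionFree A]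
    (h : ∀ r, IsDiffOpLE m fun x ↦ symbol (n + 1) r (B x)) (r s : A) :
    IsDiffOpLE m fun x ↦ deltaEnd k s ((deltaEnd k r ^ n) (B x)) 1 := by
  let family : Module.End k (Module.End k A) →ₗ[k] Module.End k A :=
    (LinearMap.lcomp k A B) ∘ₗ LinearMap.compRight k (LinearMap.applyₗ 1)
  suffices IsDiffOpLE m (family (deltaEnd k s * deltaEnd k r ^ n)) from this
  refine IsDiffOpLE.iff_forall_pow_deltaEnd_eq_zero.mpr fun p ↦ LinearMap.ext fun x ↦ ?_
  refine map_mul_pow_eq_zero_of_forall_map_pow_eq_zero (d := (deltaEnd k).toAddMonoidHom)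
    (φ := (LinearMap.applyₗ x ∘ₗ (deltaEnd k p ^ (m + 1)) ∘ₗ family).toAddMonoidHom)
    deltaEnd.commute (fun r ↦ ?_) r s
  have hr : IsDiffOpLE m (family (deltaEnd k r ^ (n + 1))) := h r
  simp [hr.pow_deltaEnd_eq_zero]

variable (B) in
/-- The Loday (left Leibniz) form of the Jacobi identity. -/
def IsLodayBracket : Prop :=
  ∀ x y z, B x (B y z) = B (B x y) z + B y (B x z)

variable [IsAddTorsionFree A] [IsReduced A]

theorem IsLodayBracket.symbol_symbol_eq_zero (hB : IsLodayBracket B)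
    (hord : ∀ x, IsDiffOpLE (n + 2) (B x))
    (h : ∀ r, IsDiffOpLE m fun x ↦ symbol (n + 2) r (B x)) (p r : A) :
    symbol m p (symbol (n + 2) r ∘ₗ B) = 0 := by
  have hfirst (x : A) : IsDiffOpLE 1 ((deltaEnd k r ^ (n + 1)) (B x)) :=
    (hord x).pow_deltaEnd (j := n + 1) r
  have happly (x a : A) : (hfirst x).toDerivation a =
      deltaEnd k a ((deltaEnd k r ^ (n + 1)) (B x)) 1 := by
    rw [IsDiffOpLE.toDerivation_apply, deltaEnd.apply_apply, mul_one]
  refine symbol_eq_zero_of_derivation_comm (X := fun x ↦ (hfirst x).toDerivation) (r := r)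
    (fun s ↦ ?_) (fun x ↦ ?_) (fun x y ↦ ?_) p
  · simpa only [happly] using isDiffOpLE_deltaEnd_pow_of_symbol h r s
  · rw [happly, LinearMap.comp_apply, symbol_apply, pow_succ' _ (n + 1), Module.End.mul_apply]
  · have hcomm : B x * B y = B (B x y) + B y * B x := LinearMap.ext (hB x y)
    simp only [happly, LinearMap.comp_apply]
    apply (hord x).deltaEnd_symbol_pow_deltaEnd_comm (hord y)
    rw [hcomm, map_add, (hord _).pow_deltaEnd_eq_zero (by lia), zero_add]

theorem IsLodayBracket.symbol_eq_zero (hB : IsLodayBracket B)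
    (hord : ∀ x, IsDiffOpLE (n + 2) (B x))
    (h : ∀ r, IsDiffOpLE m fun x ↦ symbol (n + 2) r (B x)) (r x : A) :
    symbol (n + 2) r (B x) = 0 := by
  have hvanish := hB.symbol_symbol_eq_zero hord h
  induction m with
  | zero =>
    have hconst : IsDiffOpLE 0 (symbol (n + 2) r ∘ₗ B) := h r
    simpa [hvanish] using hconst.pow_deltaEnd_apply 0 x
  | succ m ih =>
    have hdrop (r : A) : IsDiffOpLE m fun x ↦ symbol (n + 2) r (B x) := by
      have hr : IsDiffOpLE (m + 1) (symbol (n + 2) r ∘ₗ B) := h r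
      exact hr.of_forall_symbol_eq_zero fun p ↦ hvanish p r
    exact ih hdrop (hB.symbol_symbol_eq_zero hord hdrop)

theorem IsLodayBracket.isDiffOpLE_one_right (hB : IsLodayBracket B)
    (hright : ∀ x, IsDiffOpLE n (B x)) (hleft : ∀ y, IsDiffOpLE m fun x ↦ B x y) (x : A) :
    IsDiffOpLE 1 (B x) := by
  induction n with
  | zero => exact (hright x).mono zero_le_one
  | succ n ih =>
    rcases n with _ | n
    · exact hright x
    · refine ih fun x ↦ (hright x).of_forall_symbol_eq_zero fun r ↦ ?_
      exact hB.symbol_eq_zero hright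
        (fun r ↦ isDiffOpLE_pow_deltaEnd_apply hleft r (n + 2) 1) r x

end SecondArgument

section FirstArgument

variable {k A : Type*} [CommRing k] [CommRing A] [Algebra k A] {B : A →ₗ[k] Module.End k A} {n : ℕ}

theorem IsLodayBracket.apply_add_swap_eq_zero (hB : IsLodayBracket B) (x y : A) :
    B (B x y + B y x) = 0 := by
  ext z
  rw [map_add, LinearMap.add_apply, LinearMap.zero_apply]
  linear_combination -hB x y z - hB y x z

variable [IsAddTorsionFree A] [IsReduced A]

theorem IsLodayBracket.isDiffOpLE_one_left (hB : IsLodayBracket B)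
    (hright : ∀ x, IsDiffOpLE 1 (B x)) (hleft : ∀ y, IsDiffOpLE n fun x ↦ B x y) (y : A) :
    IsDiffOpLE 1 fun x ↦ B x y := by
  induction n with
  | zero => exact (hleft y).mono zero_le_one
  | succ n ih =>
    rcases n with _ | n
    · exact hleft y
    refine ih fun z ↦ ?_
    let u : Module.End k A := B.flip z
    have hu : IsDiffOpLE (n + 2) u := hleft z
    have hright' : IsDiffOpLE (n + 2) (B z) := (hright z).mono (by lia)
    refine hu.of_forall_symbol_eq_zero fun r ↦ pow_eq_zero_iff two_ne_zero |>.mp ?_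
    have hsymm : u * u = - (u * B z) := by
      ext x
      have h := hB.apply_add_swap_eq_zero x z
      rw [map_add] at h
      exact LinearMap.congr_fun (eq_neg_of_add_eq_zero_left h) z
    rw [pow_two]
    refine hu.symbol_mul_eq_zero hu r ?_
    rw [hsymm, map_neg, hu.symbol_mul hright', (hright z).symbol_eq_zero (by lia), mul_zero,
      smul_zero, neg_zero]

end FirstArgument

section FirstOrder

variable {k A : Type*} [CommRing k] [CommRing A] [Algebra k A] {B : A →ₗ[k] Module.End k A}

variable (B) in
/-- An expression of a bracket of order at most one in each argument as the sum of a biderivation,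
encoded as a derivation with values in derivations, and of terms of lower order. -/
structure FirstOrderDecomposition where
  biderivation : Derivation k A (Derivation k A A)
  right : Derivation k A A
  left : Derivation k A A
  const : A
  apply_eq : ∀ x y, B x y = biderivation x y + x * right y + y * left x + const * (x * y)

namespace FirstOrderDecomposition

/-- The decomposition in which `const = B 1 1`. -/
def ofIsDiffOpLE (hright : ∀ x, IsDiffOpLE 1 (B x)) (hleft : ∀ y, IsDiffOpLE 1 (B.flip y)) :
    FirstOrderDecomposition B where
  biderivation := Derivation.mk'
    { toFun x := (hright x).toDerivation - x • (hright 1).toDerivation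
      map_add' x x' := by
        ext y
        simp only [IsDiffOpLE.toDerivation_apply, map_add, Derivation.sub_apply,
          Derivation.smul_apply, Derivation.add_apply, LinearMap.add_apply, smul_eq_mul]
        ring
      map_smul' t x := by
        ext y
        simp [IsDiffOpLE.toDerivation_apply, smul_sub] }
    fun x x' ↦ by
      ext y
      have h := (hleft y).toDerivation.leibniz x x'
      have h1 := (hleft 1).toDerivation.leibniz x x'
      simp only [IsDiffOpLE.toDerivation_apply, LinearMap.flip_apply, smul_eq_mul] at h h1
      simp only [IsDiffOpLE.toDerivation_apply, LinearMap.coe_mk, AddHom.coe_mk,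
        Derivation.sub_apply, Derivation.smul_apply, Derivation.add_apply, smul_eq_mul]
      linear_combination h - y * h1
  right := (hright 1).toDerivation
  left := (hleft 1).toDerivation
  const := B 1 1
  apply_eq x y := by
    simp only [Derivation.coe_mk', IsDiffOpLE.toDerivation_apply, LinearMap.coe_mk,
      AddHom.coe_mk, Derivation.sub_apply, Derivation.smul_apply, LinearMap.flip_apply, smul_eq_mul]
    ring

theorem isDiffOpLE_flip (d : FirstOrderDecomposition B) (y : A) : IsDiffOpLE 1 (B.flip y) := by
  intro r s
  funext a
  simp only [delta, LinearMap.flip_apply, d.apply_eq, Derivation.leibniz, Derivation.add_apply,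
    Derivation.smul_apply, smul_eq_mul, Pi.zero_apply]
  ring

variable (d : FirstOrderDecomposition B)

theorem left_add_eq_zero_of_apply_eq_zero {w : A} (hw : B w = 0) :
    d.left w + d.const * w = 0 := by
  simpa [d.apply_eq] using LinearMap.congr_fun hw 1

theorem biderivation_add_eq_zero_of_apply_eq_zero {w : A} (hw : B w = 0) (z : A) :
    d.biderivation w z + w * d.right z = 0 := by
  have hz := LinearMap.congr_fun hw z
  rw [d.apply_eq, LinearMap.zero_apply] at hz
  linear_combination hz - z * d.left_add_eq_zero_of_apply_eq_zero hw

variable [IsAddTorsionFree A]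

/- The factors are the symbols at `q` of `B(·, z)` and of `B(x, ·) + B(·, x)`, two operators of
order at most one whose composite vanishes. -/
theorem symbol_mul_symbol_eq_zero (hB : IsLodayBracket B) (q x z : A) :
    (d.biderivation q z + z * d.left q) *
      (d.biderivation x q + d.biderivation q x + x * (d.right q + d.left q)) = 0 := by
  have hadd : IsDiffOpLE 1 (B x + B.flip x) := by
    intro r s
    funext a
    simp only [delta, LinearMap.add_apply, LinearMap.flip_apply, d.apply_eq, Derivation.leibniz,
      Derivation.add_apply, Derivation.smul_apply, smul_eq_mul, Pi.zero_apply]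
    ring
  have hmul : (B.flip z : Module.End k A) * (B x + B.flip x) = 0 :=
    LinearMap.ext fun y ↦ LinearMap.congr_fun (hB.apply_add_swap_eq_zero x y) z
  have h := (d.isDiffOpLE_flip z).symbol_mul_eq_zero hadd q (by rw [hmul, map_zero])
  simp only [symbol_apply, pow_one, deltaEnd.apply_apply, LinearMap.flip_apply,
    d.apply_eq, Derivation.map_one_eq_zero, Derivation.zero_apply, map_add, mul_one, one_mul,
    mul_zero, add_zero, zero_add] at h
  linear_combination h

theorem apply_const_eq_zero (hB : IsLodayBracket B) : B d.const = 0 := by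
  have hc : B 1 1 = d.const := by simp [d.apply_eq]
  ext z
  refine (smul_eq_zero_iff_right two_ne_zero).mp (?_ : (2 : ℕ) • B d.const z = 0)
  rw [← LinearMap.smul_apply, ← map_nsmul, two_nsmul, ← hc, hB.apply_add_swap_eq_zero,
    LinearMap.zero_apply]

theorem left_mul_right_add_left_eq_zero (hB : IsLodayBracket B) (q : A) :
    d.left q * (d.right q + d.left q) = 0 := by
  simpa only [Derivation.map_one_eq_zero, Derivation.zero_apply, map_zero, zero_add, one_mul]
    using d.symbol_mul_symbol_eq_zero hB q 1 1

theorem biderivation_mul_right_add_left_eq_zero (hB : IsLodayBracket B) (q z : A) :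
    d.biderivation q z * (d.right q + d.left q) = 0 := by
  have h := d.symbol_mul_symbol_eq_zero hB q 1 z
  simp only [Derivation.map_one_eq_zero, Derivation.zero_apply, zero_add, one_mul] at h
  linear_combination h - z * d.left_mul_right_add_left_eq_zero hB q

variable [IsReduced A]

theorem right_add_left_eq_zero (hB : IsLodayBracket B) : d.right + d.left = 0 := by
  set E := d.right + d.left with hE
  have hΛ : ∀ q z, d.biderivation q z * E q = 0 := d.biderivation_mul_right_add_left_eq_zero hB
  ext q
  have hleft : d.left q * E q = 0 := d.left_mul_right_add_left_eq_zero hB q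
  have hΛE : E q ^ 2 * d.biderivation (E q) q = 0 := by
    have h := hΛ (q + E q) q
    simp only [map_add, Derivation.add_apply] at h
    linear_combination E q * (h - hΛ q q - hΛ (E q) q) - E (E q) * hΛ q q
  have hw : B (E q + 2 • (d.const * q)) = 0 := by
    rw [← hB.apply_add_swap_eq_zero q 1]
    congr 1
    simp only [d.apply_eq, hE, Derivation.add_apply, Derivation.map_one_eq_zero,
      Derivation.zero_apply, mul_one, one_mul]
    ring
  have hΛw := d.biderivation_add_eq_zero_of_apply_eq_zero hw q
  have hΛc := d.biderivation_add_eq_zero_of_apply_eq_zero (d.apply_const_eq_zero hB) q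
  have hright : E q ^ 3 * d.right q = 0 := by
    simp only [map_add, map_nsmul, Derivation.leibniz, Derivation.add_apply,
      Derivation.smul_apply, smul_eq_mul] at hΛw
    linear_combination E q ^ 2 * (hΛw - 2 * q * hΛc) - hΛE - 2 * d.const * E q * hΛ q q
  have hpow : E q ^ 4 = 0 := by
    have hEq : E q = d.right q + d.left q := rfl
    linear_combination hright + E q ^ 2 * hleft + E q ^ 3 * hEq
  exact eq_zero_of_pow_eq_zero hpow

theorem biderivation_self (hB : IsLodayBracket B) (q : A) : d.biderivation q q = 0 := by
  have hE : d.right q + d.left q = 0 := DFunLike.congr_fun (d.right_add_left_eq_zero hB) q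
  have h (z : A) : (d.biderivation q z + z * d.left q) * (2 * d.biderivation q q) = 0 := by
    linear_combination d.symbol_mul_symbol_eq_zero hB q q z -
      (d.biderivation q z + z * d.left q) * q * hE
  have hleft : d.left q * (2 * d.biderivation q q) = 0 := by simpa using h 1
  have hsq : 2 • d.biderivation q q ^ 2 = 0 := by linear_combination h q - q * hleft
  exact eq_zero_of_pow_eq_zero ((smul_eq_zero_iff_right two_ne_zero).mp hsq)

theorem biderivation_skew (hB : IsLodayBracket B) (x y : A) :
    d.biderivation x y = -d.biderivation y x := by
  have h := d.biderivation_self hB (x + y)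
  simp only [map_add, Derivation.add_apply] at h
  linear_combination h - d.biderivation_self hB x - d.biderivation_self hB y

theorem const_eq_zero (hB : IsLodayBracket B) : d.const = 0 := by
  have hE : d.right d.const + d.left d.const = 0 :=
    DFunLike.congr_fun (d.right_add_left_eq_zero hB) d.const
  have hself := d.biderivation_self hB d.const
  have hΛ := d.biderivation_add_eq_zero_of_apply_eq_zero (d.apply_const_eq_zero hB) d.const
  have hleft := d.left_add_eq_zero_of_apply_eq_zero (d.apply_const_eq_zero hB)
  refine eq_zero_of_pow_eq_zero (n := 3) ?_
  linear_combination d.const * hleft - d.const * hE + hΛ - hself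

theorem apply_eq_of_isLodayBracket (hB : IsLodayBracket B) (x y : A) :
    B x y = d.biderivation x y + x * d.right y - y * d.right x := by
  have hE : d.right x + d.left x = 0 := DFunLike.congr_fun (d.right_add_left_eq_zero hB) x
  rw [d.apply_eq, d.const_eq_zero hB]
  linear_combination y * hE

end FirstOrderDecomposition

end FirstOrder

theorem differential_loday_bracket_is_jacobi_general
    {k A : Type*} [CommRing k] [CommRing A] [Algebra k A] [IsReduced A] [IsAddTorsionFree A]
    (B : A → A → A)
    (haddl : ∀ a b c : A, B (a + b) c = B a c + B b c)
    (haddr : ∀ a b c : A, B a (b + c) = B a b + B a c)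
    (hsmull : ∀ (t : k) (a b : A), B (t • a) b = t • B a b)
    (hsmulr : ∀ (t : k) (a b : A), B a (t • b) = t • B a b)
    (n : ℕ)
    (horder : ∀ x : A, IsDiffOpLE n (fun y => B x y) ∧ IsDiffOpLE n (fun y => B y x))
    (hjacobi : ∀ x y z : A, B x (B y z) = B (B x y) z + B y (B x z)) :
    ∃ (Γ : A → A) (Λ : A → A → A),
      (∀ a b : A, Γ (a + b) = Γ a + Γ b) ∧
      (∀ (t : k) (a : A), Γ (t • a) = t • Γ a) ∧
      (∀ a b : A, Γ (a * b) = a * Γ b + Γ a * b) ∧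
      (∀ a b c : A, Λ (a + b) c = Λ a c + Λ b c) ∧
      (∀ a b c : A, Λ a (b + c) = Λ a b + Λ a c) ∧
      (∀ (t : k) (a b : A), Λ (t • a) b = t • Λ a b) ∧
      (∀ (t : k) (a b : A), Λ a (t • b) = t • Λ a b) ∧
      (∀ a b : A, Λ a b = - Λ b a) ∧
      (∀ a b c : A, Λ a (b * c) = b * Λ a c + Λ a b * c) ∧
      (∀ a b c : A, Λ (a * b) c = a * Λ b c + Λ a c * b) ∧
      (∀ x y : A, B x y = Λ x y + x * Γ y - y * Γ x) := by
  let C : A →ₗ[k] Module.End k A := LinearMap.mk₂ k B haddl hsmull haddr hsmulr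
  have hC : IsLodayBracket C := hjacobi
  have hright := hC.isDiffOpLE_one_right (fun x ↦ (horder x).1) fun x ↦ (horder x).2
  have hleft := hC.isDiffOpLE_one_left hright fun x ↦ (horder x).2
  let d := FirstOrderDecomposition.ofIsDiffOpLE hright hleft
  refine ⟨d.right, fun x y ↦ d.biderivation x y, map_add _, d.right.map_smul, fun a b ↦ ?_,
    fun a b c ↦ ?_, fun a ↦ map_add _, fun t a b ↦ ?_, fun t a ↦ (d.biderivation a).map_smul t,
    d.biderivation_skew hC, fun a b c ↦ ?_, fun a b c ↦ ?_, d.apply_eq_of_isLodayBracket hC⟩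
  · simp [mul_comm b]
  · simp
  · simp
  · simp [mul_comm c]
  · simp [mul_comm b]

/-- **Theorem 2.** On a reduced commutative unital algebra over a field of
characteristic zero, every bidifferential Loday bracket is a standard
skew-symmetric Jacobi bracket `B(x,y) = Λ(x,y) + x·Γ(y) − y·Γ(x)` with `Γ` a
derivation and `Λ` a skew-symmetric biderivation. -/
theorem differential_loday_bracket_is_jacobi
    {k : Type*} [Field k] [CharZero k]
    {A : Type*} [CommRing A] [Algebra k A] [IsReduced A]
    (B : A → A → A)
    (haddl : ∀ a b c : A, B (a + b) c = B a c + B b c)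
    (haddr : ∀ a b c : A, B a (b + c) = B a b + B a c)
    (hsmull : ∀ (t : k) (a b : A), B (t • a) b = t • B a b)
    (hsmulr : ∀ (t : k) (a b : A), B a (t • b) = t • B a b)
    (n : ℕ)
    (horder : ∀ x : A, IsDiffOpLE n (fun y => B x y) ∧ IsDiffOpLE n (fun y => B y x))
    (hjacobi : ∀ x y z : A, B x (B y z) = B (B x y) z + B y (B x z)) :
    ∃ (Γ : A → A) (Λ : A → A → A),
      (∀ a b : A, Γ (a + b) = Γ a + Γ b) ∧
      (∀ (t : k) (a : A), Γ (t • a) = t • Γ a) ∧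
      (∀ a b : A, Γ (a * b) = a * Γ b + Γ a * b) ∧
      (∀ a b c : A, Λ (a + b) c = Λ a c + Λ b c) ∧
      (∀ a b c : A, Λ a (b + c) = Λ a b + Λ a c) ∧
      (∀ (t : k) (a b : A), Λ (t • a) b = t • Λ a b) ∧
      (∀ (t : k) (a b : A), Λ a (t • b) = t • Λ a b) ∧
      (∀ a b : A, Λ a b = - Λ b a) ∧
      (∀ a b c : A, Λ a (b * c) = b * Λ a c + Λ a b * c) ∧
      (∀ a b c : A, Λ (a * b) c = a * Λ b c + Λ a c * b) ∧
      (∀ x y : A, B x y = Λ x y + x * Γ y - y * Γ x) := by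
  have : IsAddTorsionFree A := .of_isTorsionFree k A
  exact differential_loday_bracket_is_jacobi_general B haddl haddr hsmull hsmulr n horder hjacobi
end
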